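/- Let $d \geq 1$, $1 \leq p < \infty$ and $s \in \mathbb{R}$. Then there exist a constant $c > 0$ and $N \in \mathbb{N}$ such that for all $n \geq N$, $2^{ns} \| g_n \, \partial_{x_1} f_n \|_{L^p(\mathbb{R}^d)} \geq c$; in particular $\liminf_{n \to \infty} 2^{ns} \| g_n \, \partial_{x_1} f_n \|_{L^p(\mathbb{R}^d)} > 0$. -/

import Mathlib

open MeasureTheory
open scoped RealInnerProductSpace ENNReal

/-- The Fourier transform on `ℝ` with the convention `f̂(ξ) = ∫ f(x) e^{-i x ξ} dx`. -/
noncomputable def fourierTransform1 (f : ℝ → ℝ) (ξ : ℝ) : ℂ :=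
  ∫ x : ℝ, (f x : ℂ) * Complex.exp (-Complex.I * (x : ℂ) * (ξ : ℂ))

/-- The Fourier transform on `ℝ^d` with the convention `f̂(ξ) = ∫ f(x) e^{-i x·ξ} dx`. -/
noncomputable def fourierTransformD {d : ℕ} (f : EuclideanSpace ℝ (Fin d) → ℝ)
    (ξ : EuclideanSpace ℝ (Fin d)) : ℂ :=
  ∫ x : EuclideanSpace ℝ (Fin d),
    (f x : ℂ) * Complex.exp (-Complex.I * ((⟪x, ξ⟫ : ℝ) : ℂ))

/-- The profile `f_n(x) = 2^{-ns} φ(x₁) sin((17/12) 2^n x₁) φ(x₂) ⋯ φ(x_d)`. -/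
noncomputable def fprof (d : ℕ) (hd : 0 < d) (φ : ℝ → ℝ) (s : ℝ) (n : ℕ)
    (x : EuclideanSpace ℝ (Fin d)) : ℝ :=
  (2 : ℝ) ^ (-(n : ℝ) * s) * φ (x ⟨0, hd⟩) * Real.sin (17 / 12 * 2 ^ n * x ⟨0, hd⟩) *
    ∏ i ∈ Finset.univ.filter (fun i : Fin d => i ≠ ⟨0, hd⟩), φ (x i)

/-- The profile `g_n(x) = 2^{-n} φ(x₁) φ(x₂) ⋯ φ(x_d)`. -/
noncomputable def gprof (d : ℕ) (φ : ℝ → ℝ) (n : ℕ)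
    (x : EuclideanSpace ℝ (Fin d)) : ℝ :=
  (2 : ℝ) ^ (-(n : ℝ)) * ∏ i : Fin d, φ (x i)

/-- The partial derivative in the first coordinate. -/
noncomputable def pderivOne (d : ℕ) (hd : 0 < d) (f : EuclideanSpace ℝ (Fin d) → ℝ)
    (x : EuclideanSpace ℝ (Fin d)) : ℝ :=
  fderiv ℝ f x (EuclideanSpace.single ⟨0, hd⟩ 1)

/-- Closed form of the normalized product. -/
noncomputable def Hprof (d : ℕ) (hd : 0 < d) (φ : SchwartzMap ℝ ℝ) (n : ℕ)
    (x : EuclideanSpace ℝ (Fin d)) : ℝ :=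
  17 / 12 * (∏ i, φ (x i)) ^ 2 * Real.cos (17 / 12 * 2 ^ n * x ⟨0, hd⟩) +
    (1 / 2) ^ n * ((∏ i, φ (x i)) * (deriv φ (x ⟨0, hd⟩) *
      (∏ i ∈ Finset.univ.filter (fun i : Fin d => i ≠ ⟨0, hd⟩), φ (x i))) *
        Real.sin (17 / 12 * 2 ^ n * x ⟨0, hd⟩))

lemma prod_split (d : ℕ) (hd : 0 < d) (φ : ℝ → ℝ) (x : EuclideanSpace ℝ (Fin d)) :
    ∏ i, φ (x i) = φ (x ⟨0, hd⟩) *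
      ∏ i ∈ Finset.univ.filter (fun i : Fin d => i ≠ ⟨0, hd⟩), φ (x i) := by
  rw [Finset.filter_ne', Finset.mul_prod_erase _ (fun i => φ (x i)) (Finset.mem_univ _)]

lemma pderiv_fprof (d : ℕ) (hd : 0 < d) (φ : SchwartzMap ℝ ℝ) (s : ℝ) (n : ℕ)
    (x : EuclideanSpace ℝ (Fin d)) :
    pderivOne d hd (fprof d hd (fun y => φ y) s n) x =
      (2 : ℝ) ^ (-(n : ℝ) * s) * (deriv φ (x ⟨0, hd⟩) * Real.sin (17 / 12 * 2 ^ n * x ⟨0, hd⟩) +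
        φ (x ⟨0, hd⟩) * (Real.cos (17 / 12 * 2 ^ n * x ⟨0, hd⟩) * (17 / 12 * 2 ^ n))) *
      ∏ i ∈ Finset.univ.filter (fun i : Fin d => i ≠ ⟨0, hd⟩), φ (x i) := by
  have hφd : Differentiable ℝ φ := φ.differentiable
  have hdiff : DifferentiableAt ℝ (fprof d hd (fun y => φ y) s n) x := by
    unfold fprof
    have hc : ∀ i : Fin d, DifferentiableAt ℝ
        (fun x : EuclideanSpace ℝ (Fin d) => φ (x i)) x := fun i =>
      (hφd _).comp x (by fun_prop)
    refine DifferentiableAt.mul (DifferentiableAt.mul ((hc _).const_mul _) (by fun_prop)) ?_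
    fun_prop
  unfold pderivOne
  rw [← hdiff.lineDeriv_eq_fderiv]
  unfold lineDeriv
  have hfun : (fun t : ℝ => fprof d hd (fun y => φ y) s n
      (x + t • EuclideanSpace.single ⟨0, hd⟩ 1)) = fun t =>
      (2 : ℝ) ^ (-(n : ℝ) * s) * (φ (x ⟨0, hd⟩ + t) *
        Real.sin (17 / 12 * 2 ^ n * (x ⟨0, hd⟩ + t))) *
      ∏ i ∈ Finset.univ.filter (fun i : Fin d => i ≠ ⟨0, hd⟩), φ (x i) := by
    funext t
    unfold fprof
    have : ∏ i ∈ Finset.univ.filter (fun i : Fin d => i ≠ ⟨0, hd⟩),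
        φ ((x + t • EuclideanSpace.single (⟨0, hd⟩ : Fin d) (1:ℝ)) i) =
        ∏ i ∈ Finset.univ.filter (fun i : Fin d => i ≠ ⟨0, hd⟩), φ (x i) := by
      refine Finset.prod_congr rfl (fun i hi => ?_)
      have hi' : i ≠ ⟨0, hd⟩ := (Finset.mem_filter.mp hi).2
      simp [hi']
    rw [this]
    simp [mul_assoc]
  rw [hfun]
  have h1 : HasDerivAt (fun t : ℝ => x ⟨0, hd⟩ + t) 1 0 := by
    simpa using (hasDerivAt_id (0:ℝ)).const_add (x ⟨0, hd⟩)
  have h2 : HasDerivAt (fun t : ℝ => φ (x ⟨0, hd⟩ + t)) (deriv φ (x ⟨0, hd⟩)) 0 := by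
    have h0 : HasDerivAt φ (deriv φ (x ⟨0, hd⟩)) (x ⟨0, hd⟩ + 0) := by
      simpa using (hφd (x ⟨0, hd⟩)).hasDerivAt
    have h5 := h0.comp (0:ℝ) h1
    rw [mul_one] at h5
    exact h5
  have h3 := (h1.const_mul (17 / 12 * 2 ^ n : ℝ)).sin
  have h4 := ((h2.mul h3).const_mul ((2 : ℝ) ^ (-(n : ℝ) * s))).mul_const
    (∏ i ∈ Finset.univ.filter (fun i : Fin d => i ≠ ⟨0, hd⟩), φ (x i))
  refine h4.deriv.trans ?_
  simp

lemma scaled_eq (d : ℕ) (hd : 0 < d) (φ : SchwartzMap ℝ ℝ) (s : ℝ) (n : ℕ)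
    (x : EuclideanSpace ℝ (Fin d)) :
    gprof d (fun y => φ y) n x * pderivOne d hd (fprof d hd (fun y => φ y) s n) x =
      (2 : ℝ) ^ (-(n : ℝ) * s) * Hprof d hd φ n x := by
  rw [pderiv_fprof]
  unfold gprof Hprof
  rw [prod_split d hd]
  have : (2 : ℝ) ^ (-(n : ℝ)) = (1 / 2) ^ n := by
    rw [Real.rpow_neg (by norm_num), Real.rpow_natCast]; simp
  rw [this]
  have h2 : (1 / 2 : ℝ) ^ n * 2 ^ n = 1 := by rw [← mul_pow]; norm_num
  linear_combination (17 / 12 * (2 : ℝ) ^ (-(n : ℝ) * s) * (φ (x ⟨0, hd⟩)) ^ 2 *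
    (∏ i ∈ Finset.univ.filter (fun i : Fin d => i ≠ ⟨0, hd⟩), φ (x i)) ^ 2 *
    Real.cos (17 / 12 * 2 ^ n * x ⟨0, hd⟩)) * h2

lemma norm_scaled (d : ℕ) (hd : 0 < d) (φ : SchwartzMap ℝ ℝ) (s : ℝ) (n : ℕ) (p : ℝ≥0∞) :
    (2 : ℝ) ^ ((n : ℝ) * s) *
        (eLpNorm (fun x : EuclideanSpace ℝ (Fin d) =>
          gprof d (fun y => φ y) n x * pderivOne d hd (fprof d hd (fun y => φ y) s n) x)
            p volume).toReal = (eLpNorm (Hprof d hd φ n) p volume).toReal := by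
  have : (fun x : EuclideanSpace ℝ (Fin d) =>
          gprof d (fun y => φ y) n x * pderivOne d hd (fprof d hd (fun y => φ y) s n) x) =
      (2 : ℝ) ^ (-(n : ℝ) * s) • Hprof d hd φ n := by
    funext x; simp [scaled_eq]
  rw [this, eLpNorm_const_smul, ENNReal.toReal_mul, toReal_enorm, Real.norm_eq_abs,
    abs_of_pos (by positivity), ← mul_assoc, ← Real.rpow_add (by norm_num)]
  simp

lemma memLp_prod (d : ℕ) (φ : SchwartzMap ℝ ℝ) (p : ℝ≥0∞) (hp : 1 ≤ p) (hp' : p ≠ ⊤) :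
    MemLp (fun x : EuclideanSpace ℝ (Fin d) => ∏ i, φ (x i)) p volume := by
  have hp0 : p ≠ 0 := (lt_of_lt_of_le one_pos hp).ne'
  have hcont : Continuous (fun x : Fin d → ℝ => ∏ i, φ (x i)) :=
    continuous_finsetProd _ (fun i _ => φ.continuous.comp (continuous_apply i))
  have h : MemLp (fun x : Fin d → ℝ => ∏ i, φ (x i)) p volume := by
    rw [← integrable_norm_rpow_iff hcont.aestronglyMeasurable hp0 hp']
    have := Integrable.fintype_prod (f := fun (_ : Fin d) (t : ℝ) => ‖φ t‖ ^ p.toReal)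
      (μ := fun _ => volume) (fun _ => (φ.memLp p).integrable_norm_rpow hp0 hp')
    refine this.congr (Filter.Eventually.of_forall fun x => ?_)
    simp only [norm_prod]
    rw [Real.finsetProd_rpow _ _ (fun i _ => norm_nonneg _)]
  exact h.comp_measurePreserving (PiLp.volume_preserving_ofLp (Fin d))

lemma continuous_Hprof (d : ℕ) (hd : 0 < d) (φ : SchwartzMap ℝ ℝ) (n : ℕ) :
    Continuous (Hprof d hd φ n) := by
  have hφ := φ.continuous
  have hφ' : Continuous (deriv φ) := (SchwartzMap.derivCLM ℝ ℝ φ).continuous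
  unfold Hprof
  fun_prop

lemma bounds (d : ℕ) (hd : 0 < d) (φ : SchwartzMap ℝ ℝ) :
    ∃ C > 0, ∀ x : EuclideanSpace ℝ (Fin d), |∏ i, φ (x i)| ≤ C ∧
      |deriv φ (x ⟨0, hd⟩) *
      (∏ i ∈ Finset.univ.filter (fun i : Fin d => i ≠ ⟨0, hd⟩), φ (x i))| ≤ C := by
  obtain ⟨C1, hC1, h1⟩ := φ.decay 0 0
  obtain ⟨C2, hC2, h2⟩ := (SchwartzMap.derivCLM ℝ ℝ φ).decay 0 0
  simp only [pow_zero, norm_iteratedFDeriv_zero, one_mul, Real.norm_eq_abs] at h1 h2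
  refine ⟨C1 ^ d + C2 * C1 ^ (Finset.univ.filter (fun i : Fin d => i ≠ ⟨0, hd⟩)).card,
    by positivity, fun x => ⟨?_, ?_⟩⟩
  · have : |∏ i, φ (x i)| ≤ C1 ^ d := by
      rw [Finset.abs_prod]
      refine (Finset.prod_le_prod (fun i _ => abs_nonneg _) (fun i _ => h1 (x i))).trans ?_
      simp
    have : 0 < C2 * C1 ^ (Finset.univ.filter (fun i : Fin d => i ≠ ⟨0, hd⟩)).card := by positivity
    linarith
  · have : |deriv φ (x ⟨0, hd⟩) *
      (∏ i ∈ Finset.univ.filter (fun i : Fin d => i ≠ ⟨0, hd⟩), φ (x i))| ≤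
        C2 * C1 ^ (Finset.univ.filter (fun i : Fin d => i ≠ ⟨0, hd⟩)).card := by
      rw [abs_mul, Finset.abs_prod]
      refine mul_le_mul (h2 _) ?_ (Finset.prod_nonneg fun _ _ => abs_nonneg _) hC2.le
      exact (Finset.prod_le_prod (fun i _ => abs_nonneg _) (fun i _ => h1 (x i))).trans (by simp)
    have : 0 < C1 ^ d := by positivity
    linarith

lemma tendsto_cos (d : ℕ) (hd : 0 < d) (B : Set (EuclideanSpace ℝ (Fin d)))
    (hB : MeasurableSet B) (hBf : volume B ≠ ⊤) :
    Filter.Tendsto (fun n : ℕ => ∫ x in B, Real.cos (2 * (17 / 12 * 2 ^ n * x ⟨0, hd⟩)))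
      Filter.atTop (nhds 0) := by
  have h := tendsto_integral_exp_inner_smul_cocompact (V := EuclideanSpace ℝ (Fin d))
    (B.indicator (fun _ => (1 : ℂ)))
  let w : ℕ → EuclideanSpace ℝ (Fin d) := fun n =>
    EuclideanSpace.single ⟨0, hd⟩ (17 / 12 * 2 ^ n / Real.pi)
  have hw : Filter.Tendsto w Filter.atTop (Filter.cocompact _) := by
    rw [← Metric.cobounded_eq_cocompact, ← tendsto_norm_atTop_iff_cobounded]
    have : (fun n => ‖w n‖) = fun n : ℕ => (2 : ℝ) ^ n * (17 / 12 / Real.pi) := by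
      funext n
      simp only [w, PiLp.norm_single, Real.norm_eq_abs]
      rw [abs_of_pos (by positivity)]
      ring
    rw [this]
    exact (tendsto_pow_atTop_atTop_of_one_lt (by norm_num)).atTop_mul_const (by positivity)
  have h2 := (Complex.continuous_re.tendsto _).comp (h.comp hw)
  simp only [Complex.zero_re] at h2
  refine h2.congr (fun n => ?_)
  simp only [Function.comp]
  have hIntEq : ∫ v, Real.fourierChar (-⟪v, w n⟫) • B.indicator (fun _ => (1 : ℂ)) v =
      ∫ v in B, ((Real.fourierChar (-⟪v, w n⟫) : Circle) : ℂ) := by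
    rw [← integral_indicator hB]
    congr 1
    funext v
    by_cases hv : v ∈ B <;> simp [hv, Circle.smul_def]
  rw [hIntEq]
  have hi : Integrable (fun v => ((Real.fourierChar (-⟪v, w n⟫) : Circle) : ℂ))
      (volume.restrict B) := by
    have : IsFiniteMeasure (volume.restrict B) := ⟨by simpa using hBf.lt_top⟩
    refine Integrable.of_bound (C := 1) ?_ (Filter.Eventually.of_forall fun x =>
      (Circle.norm_coe _).le)
    refine Continuous.aestronglyMeasurable ?_
    have := Real.continuous_fourierChar
    fun_prop
  refine (integral_re hi).symm.trans ?_
  congr 1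
  funext v
  rw [Real.fourierChar_apply]
  have : ⟪v, w n⟫ = 17 / 12 * 2 ^ n / Real.pi * v ⟨0, hd⟩ := by
    simp only [w]
    rw [EuclideanSpace.inner_single_right]
    simp
  rw [this]
  change (Complex.exp _).re = _
  rw [Complex.exp_ofReal_mul_I_re, ← Real.cos_neg]
  congr 1
  field_simp

lemma schwartz_exists_ne (φ : SchwartzMap ℝ ℝ)
    (h : fourierTransform1 (fun x => φ x) 0 = 1) : ∃ a, φ a ≠ 0 := by
  by_contra! hc
  simp [fourierTransform1, hc] at h

lemma lower_L1 (d : ℕ) (hd : 0 < d) (φ : SchwartzMap ℝ ℝ) (hφ : ∃ a, φ a ≠ 0) :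
    ∃ B : Set (EuclideanSpace ℝ (Fin d)), MeasurableSet B ∧ volume B ≠ ⊤ ∧ volume B ≠ 0 ∧
      ∃ c > 0, ∀ᶠ n in Filter.atTop, c ≤ ∫ x in B, ‖Hprof d hd φ n x‖ := by
  obtain ⟨a, ha⟩ := hφ
  obtain ⟨C, hC, hb⟩ := bounds d hd φ
  have hcont : Continuous (fun x : EuclideanSpace ℝ (Fin d) => (∏ i, φ (x i)) ^ 2) := by
    have := φ.continuous
    fun_prop
  let z : EuclideanSpace ℝ (Fin d) := WithLp.toLp 2 (fun _ => a)
  have hz : 0 < (∏ i, φ (z i)) ^ 2 := by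
    have : ∏ i, φ (z i) ≠ 0 := Finset.prod_ne_zero_iff.mpr fun i _ => ha
    positivity
  set m := (∏ i, φ (z i)) ^ 2 / 2 with hm
  have hmpos : 0 < m := by positivity
  have hev : ∀ᶠ x in nhds z, m < (∏ i, φ (x i)) ^ 2 :=
    hcont.continuousAt.eventually (lt_mem_nhds (by linarith))
  obtain ⟨ε, hε, hball⟩ := Metric.eventually_nhds_iff_ball.mp hev
  have hBm : MeasurableSet (Metric.ball z ε) := measurableSet_ball
  have hBf : volume (Metric.ball z ε) ≠ ⊤ := measure_ball_lt_top.ne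
  have hB0 : volume (Metric.ball z ε) ≠ 0 := (Metric.measure_ball_pos volume z hε).ne'
  refine ⟨Metric.ball z ε, hBm, hBf, hB0, ?_⟩
  set B := Metric.ball z ε
  set V := volume.real B with hV
  have hVpos : 0 < V := ENNReal.toReal_pos hB0 hBf
  have hfin : IsFiniteMeasure (volume.restrict B) := ⟨by simpa using hBf.lt_top⟩
  have hlim : Filter.Tendsto (fun n : ℕ => 17 / 12 * m * (V / 2 + (1 / 2) *
      ∫ x in B, Real.cos (2 * (17 / 12 * 2 ^ n * x ⟨0, hd⟩))) - (1 / 2) ^ n * (C * C) * V)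
      Filter.atTop (nhds (17 / 12 * m * (V / 2 + (1 / 2) * 0) - 0 * (C * C) * V)) := by
    refine Filter.Tendsto.sub (Filter.Tendsto.const_mul _ (Filter.Tendsto.const_add _
      (Filter.Tendsto.const_mul _ (tendsto_cos d hd B hBm hBf)))) ?_
    exact ((tendsto_pow_atTop_nhds_zero_of_lt_one (by norm_num) (by norm_num)).mul_const _).mul_const _
  refine ⟨17 / 12 * m * V / 4, by positivity, ?_⟩
  have hlt : 17 / 12 * m * V / 4 < 17 / 12 * m * (V / 2 + (1 / 2) * 0) - 0 * (C * C) * V := by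
    have : 0 < m * V := by positivity
    nlinarith
  filter_upwards [hlim.eventually (lt_mem_nhds hlt)] with n hn
  refine hn.le.trans ?_
  have hci : Integrable (fun x : EuclideanSpace ℝ (Fin d) =>
      Real.cos (2 * (17 / 12 * 2 ^ n * x ⟨0, hd⟩))) (volume.restrict B) := by
    refine Integrable.of_bound (C := 1) ?_ (Filter.Eventually.of_forall fun x =>
      by simpa using Real.abs_cos_le_one _)
    exact Continuous.aestronglyMeasurable (by fun_prop)
  have heq : 17 / 12 * m * (V / 2 + (1 / 2) *
      ∫ x in B, Real.cos (2 * (17 / 12 * 2 ^ n * x ⟨0, hd⟩))) - (1 / 2) ^ n * (C * C) * V =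
      ∫ x in B, ((17 / 12 * m / 2 - (1 / 2) ^ n * (C * C)) +
        17 / 12 * m / 2 * Real.cos (2 * (17 / 12 * 2 ^ n * x ⟨0, hd⟩))) := by
    rw [integral_add (integrable_const _) (hci.const_mul _), integral_const_mul, setIntegral_const]
    simp only [smul_eq_mul]
    rw [← hV]
    ring
  rw [heq]
  have hHb : ∀ x, ‖Hprof d hd φ n x‖ ≤ 17 / 12 * C ^ 2 + (1 / 2) ^ n * (C * C) := by
    intro x
    obtain ⟨b1, b2⟩ := hb x
    unfold Hprof
    refine (norm_add_le _ _).trans (add_le_add ?_ ?_)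
    · rw [Real.norm_eq_abs, abs_mul, abs_mul, abs_pow]
      have := Real.abs_cos_le_one (17 / 12 * 2 ^ n * x ⟨0, hd⟩)
      calc _ ≤ |(17 / 12 : ℝ)| * C ^ 2 * 1 := by gcongr
        _ = _ := by rw [abs_of_pos (by norm_num)]; ring
    · rw [Real.norm_eq_abs, abs_mul, abs_mul, abs_mul, abs_of_pos (by positivity : (0:ℝ) < (1/2)^n)]
      have := Real.abs_sin_le_one (17 / 12 * 2 ^ n * x ⟨0, hd⟩)
      calc _ ≤ (1 / 2) ^ n * (C * C * 1) := by gcongr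
        _ = _ := by ring
  have hHi : Integrable (Hprof d hd φ n) (volume.restrict B) :=
    Integrable.of_bound (continuous_Hprof d hd φ n).aestronglyMeasurable _
      (Filter.Eventually.of_forall hHb)
  refine setIntegral_mono_on ((integrable_const _).add (hci.const_mul _)) hHi.norm hBm ?_
  intro x hx
  obtain ⟨b1, b2⟩ := hb x
  have hmx := hball x hx
  unfold Hprof
  rw [Real.cos_two_mul]
  set P := ∏ i, φ (x i)
  set R := deriv φ (x ⟨0, hd⟩) *
      (∏ i ∈ Finset.univ.filter (fun i : Fin d => i ≠ ⟨0, hd⟩), φ (x i))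
  set θ := 17 / 12 * 2 ^ n * x ⟨0, hd⟩
  have hs := Real.abs_sin_le_one θ
  have hc := Real.abs_cos_le_one θ
  have e1 : |(1 / 2) ^ n * (P * R * Real.sin θ)| ≤ (1 / 2) ^ n * (C * C) := by
    rw [abs_mul, abs_mul, abs_mul, abs_of_pos (by positivity : (0:ℝ) < (1/2)^n)]
    calc _ ≤ (1 / 2) ^ n * (C * C * 1) := by gcongr
      _ = _ := by ring
  have e2 : 17 / 12 * m * Real.cos θ ^ 2 ≤ |17 / 12 * P ^ 2 * Real.cos θ| := by
    rw [abs_mul, abs_of_nonneg (by positivity : (0:ℝ) ≤ 17 / 12 * P ^ 2), ← sq_abs (Real.cos θ)]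
    have : |Real.cos θ| ^ 2 ≤ |Real.cos θ| := by nlinarith [abs_nonneg (Real.cos θ)]
    gcongr
  have e3 := norm_sub_norm_le (17 / 12 * P ^ 2 * Real.cos θ) (-((1 / 2) ^ n * (P * R * Real.sin θ)))
  rw [sub_neg_eq_add, norm_neg] at e3
  simp only [Real.norm_eq_abs] at e3 ⊢
  linarith

lemma upper_bound (d : ℕ) (hd : 0 < d) (φ : SchwartzMap ℝ ℝ) :
    ∃ K : ℝ, ∀ n x, ‖Hprof d hd φ n x‖ ≤ K * ‖∏ i, φ (x i)‖ := by
  obtain ⟨C, hC, hb⟩ := bounds d hd φ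
  refine ⟨17 / 12 * C + C, fun n x => ?_⟩
  obtain ⟨b1, b2⟩ := hb x
  unfold Hprof
  rw [add_mul]
  refine (norm_add_le _ _).trans (add_le_add ?_ ?_)
  · rw [Real.norm_eq_abs, abs_mul, abs_mul, abs_pow, sq]
    have := Real.abs_cos_le_one (17 / 12 * 2 ^ n * x ⟨0, hd⟩)
    calc _ ≤ |(17 / 12 : ℝ)| * (C * |∏ i, φ (x i)|) * 1 := by gcongr
      _ = _ := by rw [abs_of_pos (by norm_num), Real.norm_eq_abs]; ring
  · rw [Real.norm_eq_abs, abs_mul, abs_mul, abs_mul, abs_of_pos (by positivity : (0:ℝ) < (1/2)^n)]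
    have := Real.abs_sin_le_one (17 / 12 * 2 ^ n * x ⟨0, hd⟩)
    have h2 : (1 / 2 : ℝ) ^ n ≤ 1 := pow_le_one₀ (by norm_num) (by norm_num)
    calc _ ≤ 1 * (|∏ i, φ (x i)| * C * 1) := by gcongr
      _ = _ := by rw [Real.norm_eq_abs]; ring

/-- The quantities `2^{ns} ‖g_n ∂₁ f_n‖_{L^p(ℝ^d)}` are bounded away from zero
for large `n`; in particular their liminf is positive. -/
theorem gprof_mul_pderiv_fprof_liminf_pos (d : ℕ) (hd : 1 ≤ d) (φ : SchwartzMap ℝ ℝ)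
    (hφ1 : ∀ ξ : ℝ, |ξ| ≤ (4 : ℝ) ^ (-(d : ℤ)) → fourierTransform1 (fun x => φ x) ξ = 1)
    (hφ0 : ∀ ξ : ℝ, (2 : ℝ) ^ (-(d : ℤ)) ≤ |ξ| → fourierTransform1 (fun x => φ x) ξ = 0)
    (p : ℝ≥0∞) (hp : 1 ≤ p) (hp' : p ≠ ⊤) (s : ℝ) :
    (∃ c > (0 : ℝ), ∃ N : ℕ, ∀ n ≥ N,
      c ≤ (2 : ℝ) ^ ((n : ℝ) * s) *
        (eLpNorm (fun x : EuclideanSpace ℝ (Fin d) =>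
          gprof d (fun y => φ y) n x * pderivOne d hd (fprof d hd (fun y => φ y) s n) x)
            p volume).toReal) ∧
    0 < Filter.liminf
      (fun n : ℕ => (2 : ℝ) ^ ((n : ℝ) * s) *
        (eLpNorm (fun x : EuclideanSpace ℝ (Fin d) =>
          gprof d (fun y => φ y) n x * pderivOne d hd (fprof d hd (fun y => φ y) s n) x)
            p volume).toReal)
      Filter.atTop := by
  obtain ⟨K, hK⟩ := upper_bound d hd φ
  have hG := memLp_prod d φ p hp hp'
  have hle : ∀ n, eLpNorm (Hprof d hd φ n) p volume ≤ ENNReal.ofReal K *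
      eLpNorm (fun x : EuclideanSpace ℝ (Fin d) => ∏ i, φ (x i)) p volume := fun n =>
    eLpNorm_le_mul_eLpNorm_of_ae_le_mul (Filter.Eventually.of_forall (hK n)) p
  have htop : ENNReal.ofReal K *
      eLpNorm (fun x : EuclideanSpace ℝ (Fin d) => ∏ i, φ (x i)) p volume ≠ ⊤ :=
    ENNReal.mul_ne_top ENNReal.ofReal_ne_top hG.eLpNorm_ne_top
  have hne : ∃ a, φ a ≠ 0 := schwartz_exists_ne φ (hφ1 0 (by simp))
  obtain ⟨B, hBm, hBf, hB0, c, hc, hev⟩ := lower_L1 d hd φ hne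
  set W := volume B ^ (1 / (1 : ℝ≥0∞).toReal - 1 / p.toReal) with hW
  have hWtop : W ≠ ⊤ := ENNReal.rpow_ne_top_of_ne_zero hB0 hBf
  have hWpos : 0 < W.toReal :=
    ENNReal.toReal_pos (ENNReal.rpow_pos (pos_iff_ne_zero.mpr hB0) hBf).ne' hWtop
  have hlow : ∀ᶠ n in Filter.atTop, c / W.toReal ≤ (eLpNorm (Hprof d hd φ n) p volume).toReal := by
    filter_upwards [hev] with n hn
    have hmeas := (continuous_Hprof d hd φ n).aestronglyMeasurable (μ := volume.restrict B)
    have h1 : eLpNorm (Hprof d hd φ n) 1 (volume.restrict B) ≤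
        eLpNorm (Hprof d hd φ n) p volume * W := by
      refine (eLpNorm_le_eLpNorm_mul_rpow_measure_univ hp hmeas).trans ?_
      rw [Measure.restrict_apply_univ]
      gcongr
      exact Measure.restrict_le_self
    have hfin : eLpNorm (Hprof d hd φ n) p volume * W ≠ ⊤ :=
      ENNReal.mul_ne_top (ne_top_of_le_ne_top htop (hle n)) hWtop
    have h2 := ENNReal.toReal_mono hfin h1
    rw [ENNReal.toReal_mul, eLpNorm_one_eq_lintegral_enorm,
      ← integral_norm_eq_lintegral_enorm hmeas] at h2
    rw [div_le_iff₀ hWpos]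
    exact hn.trans h2
  simp only [norm_scaled]
  have hcpos : 0 < c / W.toReal := by positivity
  refine ⟨⟨_, hcpos, Filter.eventually_atTop.mp hlow⟩, ?_⟩
  refine hcpos.trans_le (Filter.le_liminf_of_le ?_ hlow)
  refine Filter.IsBoundedUnder.isCoboundedUnder_ge ?_
  exact Filter.isBoundedUnder_of ⟨_, fun n => ENNReal.toReal_mono htop (hle n)⟩
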